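/- arXiv:1810.11412 — 7 statements merged into one kernel-verified Lean document; each statement's English description precedes it below -/
import Mathlib

section
/- Let d ≥ 1 and let a_0, a_1, …, a_d be quaternions. If the function (z,w) ↦ ∑_{n=0}^{d} z^n · w · z^{d-n} · a_n vanishes identically on ℍ × ℍ, then a_n = 0 for every n = 0, …, d. (Linear independence, as functions, of the monomials of bidegree (d,1) with right quaternionic coefficients.) -/
/-!
The quaternion `j` satisfies `j * z = conj z * j` for `z` in `ℂ ⊆ ℍ`, so setting `w = j` turns the
sum into `∑ z ^ n * conj z ^ (d - n) * (j * a n) = conj z ^ d * ∑ (z / conj z) ^ n * (j * a n)`.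
Thus a polynomial with coefficients `j * a n` in the `ℂ`-vector space `ℍ` vanishes at all the
quotients `z / conj z`; these are infinitely many, so the coefficients vanish.
The same argument applies whenever conjugation by a unit induces a nontrivial automorphism of an
embedded field that fixes infinitely many elements, as in a cyclic algebra.
-/

theorem eq_zero_of_infinite_setOf_sum_pow_smul_eq_zero {R M : Type*} [CommRing R] [IsDomain R]
    [AddCommMonoid M] [Module R M] [Module.Projective R M] {s : Finset ℕ} {b : ℕ → M}
    (h : {q : R | ∑ n ∈ s, q ^ n • b n = 0}.Infinite) {n : ℕ} (hn : n ∈ s) : b n = 0 := by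
  refine (Module.forall_dual_apply_eq_zero_iff R (b n)).1 fun f => ?_
  let p : Polynomial R := ∑ k ∈ s, Polynomial.monomial k (f (b k))
  have hroots : {q : R | ∑ n ∈ s, q ^ n • b n = 0} ⊆ {q | p.IsRoot q} := fun q hq => by
    simpa [p, Polynomial.eval_finsetSum, mul_comm] using congrArg f hq
  have hp : p = 0 := p.eq_zero_of_infinite_isRoot (h.mono hroots)
  simpa [p, Polynomial.finsetSum_coeff, Polynomial.coeff_monomial, hn] using
    congrArg (Polynomial.coeff · n) hp

theorem infinite_image_div_algHom {F K : Type*} [Field F] [Infinite F] [Field K] [Algebra F K]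
    {σ : K →ₐ[F] K} (hσ : σ ≠ AlgHom.id F K) :
    ((fun z => z / σ z) '' {0}ᶜ).Infinite := by
  obtain ⟨x, hx⟩ : ∃ x, σ x ≠ x := by
    by_contra! hfix
    exact hσ (AlgHom.ext hfix)
  let y : F → K := fun t => x + algebraMap F K t
  have map_y (t : F) : σ (y t) = σ x + algebraMap F K t := by simp [y]
  have y_ne_zero (t : F) : y t ≠ 0 := fun ht => hx <| by
    have hσt : σ x + algebraMap F K t = 0 := by rw [← map_y, ht, map_zero]
    exact add_right_cancel (hσt.trans ht.symm)
  have div_injective : Function.Injective fun t => y t / σ (y t) := fun s t hst => by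
    have hcross : y s * σ (y t) = y t * σ (y s) :=
      (div_eq_div_iff ((map_ne_zero σ).2 (y_ne_zero s)) ((map_ne_zero σ).2 (y_ne_zero t))).1 hst
    have hprod : (σ x - x) * (algebraMap F K s - algebraMap F K t) = 0 := by
      rw [map_y, map_y] at hcross
      linear_combination hcross
    exact (algebraMap F K).injective <|
      sub_eq_zero.1 ((mul_eq_zero.1 hprod).resolve_left (sub_ne_zero.2 hx))
  refine (Set.infinite_range_of_injective div_injective).mono ?_
  rintro _ ⟨t, rfl⟩
  exact ⟨y t, y_ne_zero t, rfl⟩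

theorem sum_pow_mul_mul_pow_mul_of_semiconjBy {K A : Type*} [Field K] [Semiring A] (φ : K →+* A)
    {u : A} {z y : K} (hy : y ≠ 0) (hu : SemiconjBy u (φ z) (φ y)) (d : ℕ) (a : ℕ → A) :
    ∑ n ∈ Finset.range (d + 1), φ z ^ n * u * φ z ^ (d - n) * a n =
      φ (y ^ d) * ∑ n ∈ Finset.range (d + 1), φ ((z / y) ^ n) * (u * a n) := by
  rw [Finset.mul_sum]
  refine Finset.sum_congr rfl fun n hn => ?_
  have hscalar : z ^ n * y ^ (d - n) = y ^ d * (z / y) ^ n := by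
    rw [← pow_sub_mul_pow y (Finset.mem_range_succ_iff.1 hn), div_pow]
    field_simp
  calc φ z ^ n * u * φ z ^ (d - n) * a n
      = φ z ^ n * φ y ^ (d - n) * (u * a n) := by
        rw [mul_assoc (φ z ^ n) u, (hu.pow_right (d - n)).eq, ← mul_assoc, mul_assoc _ u]
    _ = φ (y ^ d) * (φ ((z / y) ^ n) * (u * a n)) := by
        rw [← map_pow, ← map_pow, ← map_mul, hscalar, map_mul, mul_assoc]

theorem bidegree_d_one_linear_independent_general {F K A : Type*} [Field F] [Infinite F] [Field K]
    [Algebra F K] [Ring A] (φ : K →+* A) {σ : K →ₐ[F] K} (hσ : σ ≠ AlgHom.id F K) {u : A}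
    (hu : IsLeftRegular u) (huσ : ∀ z, SemiconjBy u (φ z) (φ (σ z))) (d : ℕ) (a : ℕ → A)
    (h : ∀ z, ∑ n ∈ Finset.range (d + 1), φ z ^ n * u * φ z ^ (d - n) * a n = 0) :
    ∀ n ≤ d, a n = 0 := by
  intro n hn
  let : Module K A := Module.compHom A φ
  have hvanish : ((fun z => z / σ z) '' {0}ᶜ) ⊆
      {q : K | ∑ n ∈ Finset.range (d + 1), q ^ n • (u * a n) = 0} := by
    rintro _ ⟨z, hz, rfl⟩
    have hσz : σ z ≠ 0 := (map_ne_zero σ).2 hz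
    have hmul := h z
    rw [sum_pow_mul_mul_pow_mul_of_semiconjBy φ hσz (huσ z)] at hmul
    exact (((pow_ne_zero d hσz).isUnit.map φ).mul_right_eq_zero).1 hmul
  exact hu.mul_left_eq_zero_iff.1 <| eq_zero_of_infinite_setOf_sum_pow_smul_eq_zero
    ((infinite_image_div_algHom hσ).mono hvanish) (Finset.mem_range_succ_iff.2 hn)

/-- The quaternion unit `j`, by which conjugation acts as complex conjugation on the span of
`1` and `i`. -/
@[simps]
def quaternionJ : Quaternion ℝ := ⟨0, 0, 1, 0⟩

theorem quaternionJ_ne_zero : quaternionJ ≠ 0 := fun h =>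
  one_ne_zero (congrArg QuaternionAlgebra.imJ h)

theorem semiconjBy_quaternionJ_ofComplex (z : ℂ) :
    SemiconjBy quaternionJ (Quaternion.ofComplex z) (Quaternion.ofComplex (Complex.conjAe z)) := by
  ext <;> simp

theorem conjAe_ne_id : (Complex.conjAe : ℂ →ₐ[ℝ] ℂ) ≠ AlgHom.id ℝ ℂ := fun h => by
  have hI : -Complex.I = Complex.I := by simpa using DFunLike.congr_fun h Complex.I
  exact neg_ne_self.2 Complex.I_ne_zero hI

/-- Linear independence, as functions, of the monomials of bidegree `(d,1)`
with right quaternionic coefficients. -/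
theorem bidegree_d_one_linear_independent (d : ℕ) (hd : 1 ≤ d)
    (a : ℕ → Quaternion ℝ)
    (h : ∀ z w : Quaternion ℝ,
      ∑ n ∈ Finset.range (d + 1), z ^ n * w * z ^ (d - n) * a n = 0) :
    ∀ n ≤ d, a n = 0 :=
  bidegree_d_one_linear_independent_general Quaternion.ofComplex.toRingHom conjAe_ne_id
    (IsRegular.of_ne_zero quaternionJ_ne_zero).left semiconjBy_quaternionJ_ofComplex d a
    fun z => h (Quaternion.ofComplex z) quaternionJ
end

section
/- Let d ≥ 1 and let a_0, a_1, …, a_d be quaternions. If the function (z,w) ↦ ∑_{n=0}^{d} w^n · z · w^{d-n} · a_n vanishes identically on ℍ × ℍ, then a_n = 0 for every n = 0, …, d. (Linear independence, as functions, of the monomials of bidegree (1,d) with right quaternionic coefficients.) -/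
/-!
Let `i`, `j` be the generators of a quaternion algebra, so that `i² = c₁ + c₂ i`, `j² = c₃` and
`j i = (c₂ - i) j`. For a scalar `x` put `w = x + i` and `w̄ = x + c₂ - i`; then `j w = w̄ j`, and
all the elements `w`, `w̄` lie in one commutative subring. At `z = j` the identities for `d + 1`
distinct scalars `xₘ` therefore form a linear system `∑ₙ wₘⁿ w̄ₘᵈ⁻ⁿ (j aₙ) = 0` over that subring.
Its determinant is of projective Vandermonde type, a product of factors
`wₘ w̄ₗ - wₗ w̄ₘ = (xₘ - xₗ) (c₂ - 2i)`. Since `(c₂ - 2i)² = c₂² + 4c₁`, none of them is a zero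
divisor when `c₂² + 4c₁ ≠ 0`, so `j aₙ = 0`, and `j² = c₃ ≠ 0` gives `aₙ = 0`.
-/

section LinearSystem

open Matrix

variable {S A : Type*} [CommRing S] [Ring A] (φ : S →+* A)

theorem map_det_mul_eq_zero_of_map_mulVec_eq_zero {ι : Type*} [Fintype ι] [DecidableEq ι]
    {M : Matrix ι ι S} {b : ι → A} (h : M.map φ *ᵥ b = 0) (i : ι) : φ M.det * b i = 0 := by
  have hadj : M.adjugate.map φ * M.map φ = diagonal fun _ => φ M.det := by
    rw [← Matrix.map_mul, adjugate_mul, smul_one_eq_diagonal, diagonal_map (map_zero φ)]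
  rw [← mulVec_diagonal (fun _ => φ M.det), ← hadj, ← mulVec_mulVec, h, mulVec_zero, Pi.zero_apply]

theorem isLeftRegular_map_det_projVandermonde {N : ℕ} {v w : Fin N → S}
    (hreg : ∀ l m, l < m → IsLeftRegular (φ (v m * w l - v l * w m))) :
    IsLeftRegular (φ (projVandermonde v w).det) := by
  have hmem (l m) (hlm : l < m) : v m * w l - v l * w m ∈ (nonZeroDivisorsLeft A).comap φ :=
    isLeftRegular_iff_mem_nonZeroDivisorsLeft.mp (hreg l m hlm)
  rw [det_projVandermonde, isLeftRegular_iff_mem_nonZeroDivisorsLeft]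
  exact Submonoid.mem_comap.mp <|
    prod_mem fun l _ => prod_mem fun m hm => hmem l m (Finset.mem_Ioi.mp hm)

theorem mul_eq_zero_of_sum_pow_mul_mul_pow_eq_zero {N : ℕ} {v w : Fin N → S} {z : A}
    (hz : ∀ m, SemiconjBy z (φ (v m)) (φ (w m)))
    (hreg : ∀ l m, l < m → IsLeftRegular (φ (v m * w l - v l * w m))) {a : Fin N → A}
    (h : ∀ m, ∑ n : Fin N, φ (v m) ^ (n : ℕ) * z * φ (v m) ^ (n.rev : ℕ) * a n = 0) (n : Fin N) :
    z * a n = 0 := by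
  have hmove (m n : Fin N) : φ (v m) ^ (n : ℕ) * z * φ (v m) ^ (n.rev : ℕ) =
      φ (projVandermonde v w m n) * z := by
    rw [projVandermonde_apply, map_mul, map_pow, map_pow, mul_assoc, ((hz m).pow_right _).eq,
      mul_assoc]
  have hsystem : (projVandermonde v w).map φ *ᵥ (fun n => z * a n) = 0 := by
    ext m
    simpa only [mulVec, dotProduct, map_apply, hmove, mul_assoc, Pi.zero_apply] using h m
  exact (isLeftRegular_map_det_projVandermonde φ hreg).mul_left_eq_zero_iff.mp
    (map_det_mul_eq_zero_of_map_mulVec_eq_zero φ hsystem n)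

end LinearSystem

section QuaternionBasis

variable {R A : Type*} [CommRing R] [Ring A] [Algebra R A] {c₁ c₂ c₃ : R}
  (q : QuaternionAlgebra.Basis A c₁ c₂ c₃)

theorem semiconjBy_j_algebraMap_add_i (x : R) :
    SemiconjBy q.j (algebraMap R A x + q.i) (algebraMap R A (x + c₂) - q.i) := by
  rw [SemiconjBy, mul_add, sub_mul, q.j_mul_i, q.i_mul_j, ← Algebra.commutes, ← Algebra.smul_def,
    ← Algebra.smul_def, add_smul, add_sub_assoc]

theorem algebraMap_sub_two_mul_i_mul_self :
    (algebraMap R A c₂ - 2 * q.i) * (algebraMap R A c₂ - 2 * q.i) =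
      algebraMap R A (c₂ ^ 2 + 4 * c₁) := by
  have hcomm := Algebra.commutes c₂ q.i
  have hsq : q.i * q.i = algebraMap R A c₁ + algebraMap R A c₂ * q.i := by
    rw [q.i_mul_i, Algebra.algebraMap_eq_smul_one, ← Algebra.smul_def]
  simp only [map_add, map_mul, map_pow, map_ofNat]
  linear_combination (norm := noncomm_ring) 4 * hsq + 2 * hcomm

variable [IsDomain R] [Module.IsTorsionFree R A]

theorem isLeftRegular_algebraMap {r : R} (hr : r ≠ 0) : IsLeftRegular (algebraMap R A r) := by
  simpa only [IsLeftRegular, Algebra.smul_def] using smul_right_injective A hr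

theorem isLeftRegular_algebraMap_sub_two_mul_i (hΔ : c₂ ^ 2 + 4 * c₁ ≠ 0) :
    IsLeftRegular (algebraMap R A c₂ - 2 * q.i) :=
  .of_mul (a := algebraMap R A c₂ - 2 * q.i) <| by
    rw [algebraMap_sub_two_mul_i_mul_self]
    exact isLeftRegular_algebraMap hΔ

theorem isLeftRegular_j (hc₃ : c₃ ≠ 0) : IsLeftRegular q.j :=
  .of_mul (a := q.j) <| by
    rw [q.j_mul_j, ← Algebra.algebraMap_eq_smul_one]
    exact isLeftRegular_algebraMap hc₃

open Polynomial in
theorem bidegree_one_d_linear_independent_general (hΔ : c₂ ^ 2 + 4 * c₁ ≠ 0) (hc₃ : c₃ ≠ 0)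
    {d : ℕ} {x : Fin (d + 1) → R} (hx : Function.Injective x) {a : ℕ → A}
    (h : ∀ m, ∑ n ∈ Finset.range (d + 1), (algebraMap R A (x m) + q.i) ^ n * q.j *
      (algebraMap R A (x m) + q.i) ^ (d - n) * a n = 0) :
    ∀ n ≤ d, a n = 0 := by
  -- The commutative subring `R[i]` enters as the image of `R[X]` under `X ↦ i`.
  let v (m : Fin (d + 1)) : R[X] := C (x m) + X
  let w (m : Fin (d + 1)) : R[X] := C (x m + c₂) - X
  have hv (m) : aeval q.i (v m) = algebraMap R A (x m) + q.i := by simp [v]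
  have hw (m) : aeval q.i (w m) = algebraMap R A (x m + c₂) - q.i := by simp [w]
  have hfactor (l m) : v m * w l - v l * w m = C (x m - x l) * (C c₂ - 2 * X) := by
    simp only [v, w, C_add, C_sub]
    ring
  have hreg (l m) (hlm : l < m) : IsLeftRegular (aeval q.i (v m * w l - v l * w m)) := by
    have hxlm : x m - x l ≠ 0 := sub_ne_zero.mpr (hx.ne hlm.ne')
    simpa [hfactor, map_ofNat] using
      (isLeftRegular_algebraMap (A := A) hxlm).mul (isLeftRegular_algebraMap_sub_two_mul_i q hΔ)
  intro n hn
  have hj : q.j * a n = 0 := by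
    refine mul_eq_zero_of_sum_pow_mul_mul_pow_eq_zero (aeval q.i : R[X] →ₐ[R] A).toRingHom
      (v := v) (w := w) (a := fun n => a n) (fun m => ?_) hreg (fun m => ?_)
      ⟨n, Nat.lt_succ_of_le hn⟩
    · simpa [hv, hw] using semiconjBy_j_algebraMap_add_i q (x m)
    · simpa [hv, Finset.sum_range, Fin.val_rev] using h m
  exact (isLeftRegular_j q hc₃).mul_left_eq_zero_iff.mp hj

end QuaternionBasis

/-- Linear independence, as functions, of the monomials of bidegree `(1,d)`
with right quaternionic coefficients. -/
theorem bidegree_one_d_linear_independent (d : ℕ) (hd : 1 ≤ d)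
    (a : ℕ → Quaternion ℝ)
    (h : ∀ z w : Quaternion ℝ,
      ∑ n ∈ Finset.range (d + 1), w ^ n * z * w ^ (d - n) * a n = 0) :
    ∀ n ≤ d, a n = 0 :=
  bidegree_one_d_linear_independent_general (QuaternionAlgebra.Basis.self ℝ) (by norm_num)
    (by norm_num) (Nat.cast_injective.comp Fin.val_injective) fun _ => h _ _
end

section
/- For all nonnegative integers p, q with p + q = d, there exist real numbers r_0, r_1, …, r_d such that S_{p,q}(z,w) = ∑_{n=0}^{d} (z - n•w)^d · r_n for all quaternions z, w (here n•w is the scalar multiple of w by the real number n). -/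
/-!
Collecting the words of `(z + t • w) ^ d` by their number of letters `w` gives a polynomial in the
central scalar `t` whose coefficient at `t ^ q` is `S_{d-q,q}`. Lagrange interpolation recovers
each coefficient of a polynomial of degree at most `d` as a linear combination of its values at
`d + 1` distinct nodes; the nodes `t = 0, -1, …, -d` give the powers `(z - n • w) ^ d`.
-/

open Finset

/-- The ordered product of `z`'s and `w`'s determined by the word `α ∈ {0,1}^d`:
the `i`-th factor is `z` if `α i = true` and `w` otherwise. -/
noncomputable def wordProd {d : ℕ} (z w : Quaternion ℝ) (α : Fin d → Bool) : Quaternion ℝ :=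
  (List.ofFn fun i => if α i then z else w).prod

/-- `S d p z w`: the sum of the monomials corresponding to all words of length `d`
with exactly `p` entries equal to `1` (i.e. `p` factors `z` and `d - p` factors `w`). -/
noncomputable def S (d p : ℕ) (z w : Quaternion ℝ) : Quaternion ℝ :=
  ∑ α ∈ univ.filter (fun α : Fin d → Bool => (univ.filter fun i => α i = true).card = p),
    wordProd z w α

/-- The noncommutative counterpart of `d.choose p • (z ^ p * w ^ (d - p))`: the sum of all ordered
products of `d` factors, `p` of them `z` and the others `w`. It extends `S` to any semiring; a word
is encoded by the set of positions at which it has the letter `z`. -/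
def wordSum {A : Type*} [Semiring A] (d p : ℕ) (z w : A) : A :=
  ∑ s ∈ powersetCard p (univ : Finset (Fin d)), (List.ofFn fun i => if i ∈ s then z else w).prod

theorem S_eq_wordSum (d p : ℕ) (z w : Quaternion ℝ) : S d p z w = wordSum d p z w := by
  refine sum_nbij' (fun α => ({i | α i = true} : Finset (Fin d))) (fun s i => decide (i ∈ s))
    ?_ ?_ ?_ ?_ ?_ <;>
    simp [wordProd]

theorem add_pow_eq_sum_wordSum {A : Type*} [Semiring A] (d : ℕ) (z w : A) :
    (z + w) ^ d = ∑ k ∈ range (d + 1), wordSum d k z w := by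
  calc
    (z + w) ^ d = MultilinearMap.mkPiAlgebraFin ℕ d A ((fun _ => z) + fun _ => w) :=
      (MultilinearMap.mkPiAlgebraFin_apply_const _).symm
    _ = ∑ s : Finset (Fin d), (List.ofFn fun i => if i ∈ s then z else w).prod :=
      MultilinearMap.map_add_univ _ _ _
    _ = ∑ k ∈ range (d + 1), wordSum d k z w := by
      rw [← powerset_univ, sum_powerset, card_univ, Fintype.card_fin]
      rfl

theorem wordSum_smul_right {R A : Type*} [CommSemiring R] [Semiring A] [Algebra R A] (d p : ℕ)
    (t : R) (z w : A) : wordSum d p z (t • w) = t ^ (d - p) • wordSum d p z w := by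
  rw [wordSum, wordSum, smul_sum]
  refine sum_congr rfl fun s hs => ?_
  have hscalars : ∏ i, (if i ∈ s then 1 else t) = t ^ (d - p) := by
    rw [prod_ite, prod_const_one, one_mul, prod_const, ← compl_filter, card_compl]
    simp [(mem_powersetCard.1 hs).2]
  calc
    (List.ofFn fun i => if i ∈ s then z else t • w).prod
      = MultilinearMap.mkPiAlgebraFin R d A
          fun i => (if i ∈ s then 1 else t) • if i ∈ s then z else w := by
        rw [MultilinearMap.mkPiAlgebraFin_apply]
        congr 2 with i
        split_ifs <;> simp only [one_smul]
    _ = t ^ (d - p) • (List.ofFn fun i => if i ∈ s then z else w).prod := by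
        rw [MultilinearMap.map_smul_univ, hscalars, MultilinearMap.mkPiAlgebraFin_apply]

section Interpolation

variable {ι K : Type*} [DecidableEq ι] [Field K] {s : Finset ι} {v : ι → K}

open Polynomial in
theorem sum_basis_coeff_mul_eval (hv : Set.InjOn v s) {f : K[X]} (hf : f.degree < #s) (k : ℕ) :
    ∑ i ∈ s, (Lagrange.basis s v i).coeff k * f.eval (v i) = f.coeff k := by
  conv_rhs => rw [Lagrange.eq_interpolate hv hf, Lagrange.interpolate_apply, finsetSum_coeff]
  simp only [coeff_mul_C, mul_comm]

theorem sum_basis_coeff_mul_pow (hv : Set.InjOn v s) {j : ℕ} (hj : j < #s) (k : ℕ) :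
    ∑ i ∈ s, (Lagrange.basis s v i).coeff k * v i ^ j = if k = j then 1 else 0 := by
  simpa [Polynomial.coeff_X_pow] using
    sum_basis_coeff_mul_eval hv (f := Polynomial.X ^ j) (by simpa using hj) k

theorem S_eq_sum_pow_sub_nsmul_general {A : Type*} [Semiring A] [Algebra K A]
    (hv : Set.InjOn v s) {p q : ℕ} (hs : p + q < #s) (z w : A) :
    wordSum (p + q) p z w =
      ∑ i ∈ s, (Lagrange.basis s v i).coeff q • (z + v i • w) ^ (p + q) := by
  have hcoeff : ∀ k ∈ range (p + q + 1),
      ∑ i ∈ s, (Lagrange.basis s v i).coeff q * v i ^ (p + q - k) = if k = p then 1 else 0 := by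
    intro k hk
    rw [mem_range] at hk
    rw [sum_basis_coeff_mul_pow hv (by omega)]
    exact if_congr (by omega) rfl rfl
  symm
  calc
    ∑ i ∈ s, (Lagrange.basis s v i).coeff q • (z + v i • w) ^ (p + q)
      = ∑ k ∈ range (p + q + 1),
          (∑ i ∈ s, (Lagrange.basis s v i).coeff q * v i ^ (p + q - k)) •
            wordSum (p + q) k z w := by
        simp only [add_pow_eq_sum_wordSum, wordSum_smul_right, smul_sum, sum_smul, smul_smul]
        exact sum_comm
    _ = ∑ k ∈ range (p + q + 1), (if k = p then 1 else 0 : K) • wordSum (p + q) k z w :=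
        sum_congr rfl fun k hk => by rw [hcoeff k hk]
    _ = wordSum (p + q) p z w := by simp

end Interpolation

/-- Every `S_{p,q}` is a real linear combination of the polynomials `(z - n w)^{p+q}`,
`n = 0, …, p + q`. -/
theorem S_eq_sum_pow_sub_nsmul (p q : ℕ) :
    ∃ r : ℕ → ℝ, ∀ z w : Quaternion ℝ,
      S (p + q) p z w
        = ∑ n ∈ Finset.range (p + q + 1),
            (z - (n : ℝ) • w) ^ (p + q) * ((r n : ℝ) : Quaternion ℝ) := by
  refine ⟨fun n => (Lagrange.basis (range (p + q + 1)) (fun m => -(m : ℝ)) n).coeff q,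
    fun z w => ?_⟩
  simp only [S_eq_wordSum, Quaternion.mul_coe_eq_smul, sub_eq_add_neg, ← neg_smul]
  exact S_eq_sum_pow_sub_nsmul_general (neg_injective.comp Nat.cast_injective).injOn (by simp) z w
end

section
/- For every natural number d, every real polynomial of degree at most d is a real linear combination of the polynomials (X - 0)^d, (X - 1)^d, …, (X - d)^d; equivalently, the family {(X - n)^d : n = 0, …, d} spans (and hence is a basis of) the space of real polynomials of degree at most d. -/
/-!
The coefficient of `X ^ (d - i)` in `∑ n, g n • (X - C (f n)) ^ d` is the power sum
`∑ n, g n * (-f n) ^ i` times `d.choose i`. When the binomial coefficients are nonzero, a linear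
relation thus makes these power sums vanish, and `g = 0` by Vandermonde. Independence of `d + 1`
such powers then gives spanning by counting dimensions.
-/

section

open Polynomial

theorem coeff_sum_smul_X_sub_C_pow {R ι : Type*} [CommRing R] (s : Finset ι) (g f : ι → R)
    {d i : ℕ} (hi : i ≤ d) :
    (∑ n ∈ s, g n • (X - C (f n)) ^ d).coeff (d - i) =
      (∑ n ∈ s, g n * (-f n) ^ i) * d.choose i := by
  simp only [sub_eq_add_neg, ← C_neg, finsetSum_coeff, coeff_smul, coeff_X_add_C_pow,
    Nat.sub_sub_self hi, Nat.choose_symm hi, smul_eq_mul, ← mul_assoc, Finset.sum_mul]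

theorem linearIndependent_X_sub_C_pow {R : Type*} [CommRing R] [IsDomain R] {m d : ℕ}
    {f : Fin m → R} (hf : Function.Injective f) (hd : ∀ i < m, (d.choose i : R) ≠ 0) :
    LinearIndependent R fun n => (X - C (f n)) ^ d := by
  rw [Fintype.linearIndependent_iff]
  intro g hg
  have power_sum_eq_zero (i : Fin m) : ∑ n, g n * (-f n) ^ (i : ℕ) = 0 := by
    have hchoose := hd i i.isLt
    have hi : (i : ℕ) ≤ d := by
      by_contra! hlt
      exact hchoose (by rw [Nat.choose_eq_zero_of_lt hlt, Nat.cast_zero])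
    have hcoeff := coeff_sum_smul_X_sub_C_pow Finset.univ g f hi
    rw [hg, coeff_zero] at hcoeff
    exact (mul_eq_zero.mp hcoeff.symm).resolve_right hchoose
  exact congrFun
    (Matrix.eq_zero_of_forall_pow_sum_mul_pow_eq_zero (neg_injective.comp hf) power_sum_eq_zero)

theorem span_X_sub_C_pow_le_degreeLE {R ι : Type*} [CommRing R] (f : ι → R) (d : ℕ) :
    Submodule.span R (Set.range fun n => (X - C (f n)) ^ d) ≤ degreeLE R d := by
  rw [Submodule.span_le]
  rintro _ ⟨n, rfl⟩
  exact mem_degreeLE.mpr (by simpa using degree_pow_le_of_le d (degree_X_sub_C_le (f n)))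

theorem span_X_sub_C_pow_eq_degreeLE {K : Type*} [Field K] {d : ℕ} {f : Fin (d + 1) → K}
    (hf : Function.Injective f) (hd : ∀ i ≤ d, (d.choose i : K) ≠ 0) :
    Submodule.span K (Set.range fun n => (X - C (f n)) ^ d) = degreeLE K d := by
  have hli : LinearIndependent K fun n => (X - C (f n)) ^ d :=
    linearIndependent_X_sub_C_pow hf fun i hi => hd i (Nat.lt_succ_iff.mp hi)
  have hle := span_X_sub_C_pow_le_degreeLE f d
  rw [← degreeLT_succ_eq_degreeLE] at hle ⊢
  have := (degreeLT.basis K (d + 1)).finiteDimensional_of_finite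
  refine Submodule.eq_of_le_of_finrank_eq hle ?_
  rw [finrank_span_eq_card hli, Module.finrank_eq_card_basis (degreeLT.basis K (d + 1))]

theorem mem_span_pow_X_sub_C_general {K : Type*} [Field K] {d : ℕ} {f : Fin (d + 1) → K}
    (hf : Function.Injective f) (hd : ∀ i ≤ d, (d.choose i : K) ≠ 0) {P : K[X]}
    (hP : P.degree ≤ d) :
    P ∈ Submodule.span K (Set.range fun n => (X - C (f n)) ^ d) := by
  rwa [span_X_sub_C_pow_eq_degreeLE hf hd, mem_degreeLE]

end

/-- For every `d`, the polynomials `(X - 0)^d, (X - 1)^d, …, (X - d)^d` span the space of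
real polynomials of degree at most `d`. -/
theorem mem_span_pow_X_sub_C (d : ℕ) (P : Polynomial ℝ) (hP : P.degree ≤ d) :
    P ∈ Submodule.span ℝ
      (Set.range fun n : Fin (d + 1) =>
        (Polynomial.X - Polynomial.C ((n : ℕ) : ℝ)) ^ d) :=
  mem_span_pow_X_sub_C_general (Nat.cast_injective.comp Fin.val_injective)
    (fun _ hi => Nat.cast_ne_zero.mpr (Nat.choose_pos hi).ne') hP
end

section
/- For all nonnegative integers p, q and all quaternions z, w, h, one has ∂̂_z S_{p+1,q}(z,w)[h] = ∂̂_w S_{p,q+1}(z,w)[h]. Explicitly: the sum, over all words α ∈ {0,1}^{p+q+1} with exactly p+1 ones and over all positions i with α_i = 1, of the ordered product (z,w)^α with its i-th factor replaced by h, equals the sum, over all words β ∈ {0,1}^{p+q+1} with exactly p ones and over all positions i with β_i = 0, of the ordered product (z,w)^β with its i-th factor replaced by h. -/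
open Finset

/-- The ordered product determined by the word `α ∈ {0,1}^d`, with the `i`-th factor
replaced by `h`; the other factors are `z` where `α = 1` and `w` where `α = 0`. -/
noncomputable def wordProdRep {d : ℕ} (z w h : Quaternion ℝ) (α : Fin d → Bool) (i : Fin d) :
    Quaternion ℝ :=
  (List.ofFn fun j => if j = i then h else if α j then z else w).prod

/-- `∂̂_z S_{p,d-p}(z,w)[h]`: the sum over all words of length `d` with exactly `p` ones and
over all positions carrying a `1`, of the corresponding monomial with that factor `z`
replaced by `h`. -/
noncomputable def DzS (d p : ℕ) (z w h : Quaternion ℝ) : Quaternion ℝ :=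
  ∑ α ∈ univ.filter (fun α : Fin d → Bool => (univ.filter fun i => α i = true).card = p),
    ∑ i ∈ univ.filter (fun i => α i = true), wordProdRep z w h α i

/-- `∂̂_w S_{p,d-p}(z,w)[h]`: the sum over all words of length `d` with exactly `p` ones and
over all positions carrying a `0`, of the corresponding monomial with that factor `w`
replaced by `h`. -/
noncomputable def DwS (d p : ℕ) (z w h : Quaternion ℝ) : Quaternion ℝ :=
  ∑ α ∈ univ.filter (fun α : Fin d → Bool => (univ.filter fun i => α i = true).card = p),
    ∑ i ∈ univ.filter (fun i => α i = false), wordProdRep z w h α i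

/-! Setting the `i`-th letter of a word to `1` is a bijection from the words with `p` ones and a
`0` at position `i` onto the words with `p + 1` ones and a `1` at position `i`. A monomial whose
`i`-th factor has been replaced does not remember its `i`-th letter, so the two sums agree position
by position. -/

section BoolWords

variable {ι : Type*} [DecidableEq ι]

theorem update_update_eq_self {β : Type*} {α : ι → β} {i : ι} {b : β} (hi : α i = b) (c : β) :
    Function.update (Function.update α i c) i b = α := by
  rw [Function.update_idem, ← hi, Function.update_eq_self]

variable [Fintype ι]

theorem card_filter_update_true {α : ι → Bool} {i : ι} (hi : α i = false) :
    #{j | Function.update α i true j = true} = #{j | α j = true} + 1 := by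
  have filter_eq_insert : univ.filter (fun j => Function.update α i true j = true) =
      insert i (univ.filter fun j => α j = true) := by
    ext j
    by_cases hj : j = i <;> simp [hj]
  rw [filter_eq_insert, card_insert_of_notMem (by simp [hi])]

theorem card_filter_update_false_add_one {α : ι → Bool} {i : ι} (hi : α i = true) :
    #{j | Function.update α i false j = true} + 1 = #{j | α j = true} := by
  simpa only [update_update_eq_self hi] using
    (card_filter_update_true (Function.update_self i false α)).symm

variable {M : Type*} [AddCommMonoid M]

theorem sum_words_true_eq_sum_words_false (p : ℕ) (i : ι) (f : (ι → Bool) → M)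
    (hf : ∀ α b, f (Function.update α i b) = f α) :
    ∑ α : ι → Bool with #{j | α j = true} = p + 1 ∧ α i = true, f α =
      ∑ α : ι → Bool with #{j | α j = true} = p ∧ α i = false, f α := by
  refine sum_nbij' (Function.update · i false) (Function.update · i true) ?_ ?_ ?_ ?_ ?_
  · intro α hα
    simp only [mem_filter_univ] at hα ⊢
    exact ⟨Nat.add_right_cancel ((card_filter_update_false_add_one hα.2).trans hα.1),
      Function.update_self ..⟩
  · intro α hα
    simp only [mem_filter_univ] at hα ⊢
    exact ⟨(card_filter_update_true hα.2).trans (congrArg (· + 1) hα.1), Function.update_self ..⟩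
  · exact fun α hα => update_update_eq_self ((mem_filter_univ α).mp hα).2 false
  · exact fun α hα => update_update_eq_self ((mem_filter_univ α).mp hα).2 true
  · exact fun α _ => (hf α false).symm

theorem sum_words_sum_true_eq_sum_words_sum_false (p : ℕ) (f : (ι → Bool) → ι → M)
    (hf : ∀ α i b, f (Function.update α i b) i = f α i) :
    ∑ α : ι → Bool with #{j | α j = true} = p + 1, ∑ i with α i = true, f α i =
      ∑ α : ι → Bool with #{j | α j = true} = p, ∑ i with α i = false, f α i := by
  have sum_position_first (n : ℕ) (b : Bool) :
      ∑ α : ι → Bool with #{j | α j = true} = n, ∑ i with α i = b, f α i =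
        ∑ i, ∑ α : ι → Bool with #{j | α j = true} = n ∧ α i = b, f α i :=
    sum_comm' fun α i => by simp only [mem_filter_univ, mem_univ, and_true]
  rw [sum_position_first, sum_position_first]
  exact sum_congr rfl fun i _ => sum_words_true_eq_sum_words_false p i (f · i) fun α => hf α i

end BoolWords

theorem DzS_eq_DwS_general {R : Type*} [Semiring R] (d p : ℕ) (z w h : R) :
    ∑ α : Fin d → Bool with #{j | α j = true} = p + 1, ∑ i with α i = true,
        (List.ofFn fun j => if j = i then h else if α j then z else w).prod =
      ∑ α : Fin d → Bool with #{j | α j = true} = p, ∑ i with α i = false,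
        (List.ofFn fun j => if j = i then h else if α j then z else w).prod := by
  refine sum_words_sum_true_eq_sum_words_sum_false p _ fun α i b => ?_
  refine congrArg List.prod (congrArg List.ofFn (funext fun j => ?_))
  refine ite_congr rfl (fun _ => rfl) fun hj => ?_
  rw [Function.update_of_ne hj]

/-- `∂̂_z S_{p+1,q}(z,w)[h] = ∂̂_w S_{p,q+1}(z,w)[h]`. -/
theorem DzS_eq_DwS (p q : ℕ) (z w h : Quaternion ℝ) :
    DzS (p + q + 1) (p + 1) z w h = DwS (p + q + 1) p z w h :=
  DzS_eq_DwS_general (p + q + 1) p z w h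
end

section
/- Let a, b, c, d be real numbers with ad - bc ≠ 0 and let f : ℍ → ℍ be differentiable over ℝ. Define the vector field Y : ℍ² → ℍ² by Y(z,w) := ((ad-bc)⁻¹ d • ((a•z + b•w) · f(c•z + d•w)), -(ad-bc)⁻¹ c • ((a•z + b•w) · f(c•z + d•w))). Then Div Y(z,w)[h] = h · f(c•z + d•w) for all z, w, h ∈ ℍ. (Overshear vector fields have divergence f(cz + dw).) -/
/-!
Both components of the overshear field are scalar multiples `α • F`, `β • F` of
`F (z, w) = (a • z + b • w) * f (c • z + d • w)`, so its divergence applied to `h` is the derivative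
of `F` in the direction `(α • h, β • h)`. The matrix with rows `(a, b)` and `(c, d)` sends this
direction to `(h, 0)`, so the argument of `f` does not vary and only the linear factor of `F`
contributes.
-/

section Divergence

variable {𝕜 E : Type*} [NontriviallyNormedField 𝕜] [NormedAddCommGroup E] [NormedSpace 𝕜 E]

variable (𝕜) in
/-- The divergence `Div X(p)[h]` of a vector field `X` on `E × E`: each component is differentiated
in its own variable, and both partial derivatives are applied to the same `h : E`, so that it is
`E`-valued and linear in `h`. A component that is not differentiable in its variable at `p`
contributes `0`. -/
noncomputable def divergence (X : E × E → E × E) (p : E × E) (h : E) : E :=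
  fderiv 𝕜 (fun z => (X (z, p.2)).1) p.1 h + fderiv 𝕜 (fun w => (X (p.1, w)).2) p.2 h

theorem divergence_of_hasFDerivAt {X : E × E → E × E} {X' : E × E →L[𝕜] E × E} {p : E × E}
    (hX : HasFDerivAt X X' p) (h : E) :
    divergence 𝕜 X p h = (X' (h, 0)).1 + (X' (0, h)).2 := by
  have hz : HasFDerivAt (X ∘ fun z => (z, p.2)) (X' ∘L .inl 𝕜 E E) p.1 :=
    HasFDerivAt.comp p.1 hX (hasFDerivAt_prodMk_left p.1 p.2)
  have hw : HasFDerivAt (X ∘ fun w => (p.1, w)) (X' ∘L .inr 𝕜 E E) p.2 :=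
    HasFDerivAt.comp p.2 hX (hasFDerivAt_prodMk_right p.1 p.2)
  exact congrArg₂ (· + ·) (DFunLike.congr_fun hz.fst.fderiv h)
    (DFunLike.congr_fun hw.snd.fderiv h)

theorem divergence_smul_prodMk_smul {F : E × E → E} {F' : E × E →L[𝕜] E} {p : E × E}
    (hF : HasFDerivAt F F' p) (α β : 𝕜) (h : E) :
    divergence 𝕜 (fun q => (α • F q, β • F q)) p h = F' (α • h, β • h) :=
  calc divergence 𝕜 (fun q => (α • F q, β • F q)) p h
      = α • F' (h, 0) + β • F' (0, h) :=
        divergence_of_hasFDerivAt ((hF.const_smul α).prodMk (hF.const_smul β)) h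
    _ = F' (α • h, β • h) := by simp [← map_smul, ← map_add]

end Divergence

section Overshear

variable {𝕜 A : Type*} [NontriviallyNormedField 𝕜] [NormedRing A] [NormedAlgebra 𝕜 A]

theorem divergence_smul_mul_comp_of_map_eq_zero
    {G : Type*} [NormedAddCommGroup G] [NormedSpace 𝕜 G] (L : A × A →L[𝕜] A)
    (M : A × A →L[𝕜] G) {f : G → A} {p : A × A}
    (hf : DifferentiableAt 𝕜 f (M p)) {α β : 𝕜} {h : A} (hM : M (α • h, β • h) = 0) :
    divergence 𝕜 (fun q => (α • (L q * f (M q)), β • (L q * f (M q)))) p h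
      = L (α • h, β • h) * f (M p) := by
  have hasFDerivAt_mul := L.hasFDerivAt.fun_mul' (hf.hasFDerivAt.comp p M.hasFDerivAt)
  refine (divergence_smul_prodMk_smul hasFDerivAt_mul α β h).trans ?_
  simp [hM]

theorem overshear_vector_field_div_general (a b c d : 𝕜) (habcd : a * d - b * c ≠ 0) {f : A → A}
    {z w : A} (hf : DifferentiableAt 𝕜 f (c • z + d • w)) (h : A) :
    divergence 𝕜 (fun p =>
        (((a * d - b * c)⁻¹ * d) • ((a • p.1 + b • p.2) * f (c • p.1 + d • p.2)),
          (-((a * d - b * c)⁻¹ * c)) • ((a • p.1 + b • p.2) * f (c • p.1 + d • p.2)))) (z, w) h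
      = h * f (c • z + d • w) := by
  let L (s t : 𝕜) : A × A →L[𝕜] A :=
    s • ContinuousLinearMap.fst 𝕜 A A + t • ContinuousLinearMap.snd 𝕜 A A
  let v : A × A := (((a * d - b * c)⁻¹ * d) • h, (-((a * d - b * c)⁻¹ * c)) • h)
  have L_apply_v (s t : 𝕜) : L s t v = ((a * d - b * c)⁻¹ * (s * d - t * c)) • h := by
    simp only [L, v, add_apply, smul_apply, ContinuousLinearMap.coe_fst',
      ContinuousLinearMap.coe_snd']
    module
  have first_row : L a b v = h := by rw [L_apply_v, inv_mul_cancel₀ habcd, one_smul]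
  have second_row : L c d v = 0 := by
    rw [L_apply_v, mul_comm c d, sub_self, mul_zero, zero_smul]
  calc _ = L a b v * f (c • z + d • w) :=
        divergence_smul_mul_comp_of_map_eq_zero (L a b) (L c d) hf second_row
    _ = h * f (c • z + d • w) := by rw [first_row]

end Overshear

/-- Overshear vector fields have divergence `f(cz + dw)`: for real `a, b, c, d` with
`ad - bc ≠ 0` and real-differentiable `f : ℍ → ℍ`, the vector field
`Y(z,w) = ((ad-bc)⁻¹ d • ((az+bw)·f(cz+dw)), -(ad-bc)⁻¹ c • ((az+bw)·f(cz+dw)))`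
satisfies `Div Y(z,w)[h] = h · f(cz + dw)`. -/
theorem overshear_vector_field_div (a b c d : ℝ) (habcd : a * d - b * c ≠ 0)
    (f : Quaternion ℝ → Quaternion ℝ) (hf : Differentiable ℝ f) (z w h : Quaternion ℝ) :
    fderiv ℝ (fun z' =>
        ((a * d - b * c)⁻¹ * d) • ((a • z' + b • w) * f (c • z' + d • w))) z h
      + fderiv ℝ (fun w' =>
        (-((a * d - b * c)⁻¹ * c)) • ((a • z + b • w') * f (c • z + d • w'))) w h
      = h * f (c • z + d • w) :=
  overshear_vector_field_div_general a b c d habcd (hf _) h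
end

section
/- Let μ ∈ ℍ and define the vector field X : ℍ² → ℍ² by X(z,w) := (μ · (z - μw)², (z - μw)²). Then X has divergence (i.e., there exists g : ℍ² → ℍ with Div X(z,w)[h] = h · g(z,w) for all z, w, h ∈ ℍ) if and only if μ is real; in that case Div X ≡ 0. -/
/-!
The product rule turns the divergence operator of the shear at `(z, w)` into left multiplication
by the commutator `⁅μ, z - μw⁆`. A left multiplication `h ↦ a h` has the form `h ↦ h g` only if
`g = a` (take `h = 1`) and `a` is central, so the shear has divergence iff all the commutators
`⁅μ, z⁆` are central. Since `⁅μ, μz⁆ = μ⁅μ, z⁆`, this makes `⁅μ, z⁆` and `μ⁅μ, z⁆` commute with `z`,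
whence `⁅μ, z⁆² = 0`. So `⁅μ, z⁆ = 0`, `μ` is central, and the center of `ℍ` is `ℝ`.
-/

open scoped Quaternion

section Commutator

variable {R : Type*} [Ring R]

theorem lie_sq_eq_zero_of_lie_mem_center {a : R} (ha : ∀ b, ⁅a, b⁆ ∈ Subring.center R) (b : R) :
    ⁅a, b⁆ ^ 2 = 0 := by
  simp only [Subring.mem_center_iff] at ha
  have lie_mul_self : ⁅a, a * b⁆ = a * ⁅a, b⁆ := by
    simp only [Ring.lie_def, mul_sub, mul_assoc]
  calc ⁅a, b⁆ ^ 2 = a * (b * ⁅a, b⁆) - b * (a * ⁅a, b⁆) := by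
        rw [sq, ← mul_assoc a, ← mul_assoc b, ← sub_mul, ← Ring.lie_def]
    _ = a * ⁅a, b⁆ * b - b * (a * ⁅a, b⁆) := by rw [ha b b, mul_assoc]
    _ = 0 := by rw [← lie_mul_self, ha (a * b) b, sub_self]

theorem forall_lie_mem_center_iff [IsReduced R] {a : R} :
    (∀ b, ⁅a, b⁆ ∈ Subring.center R) ↔ a ∈ Subring.center R := by
  refine ⟨fun ha => Subring.mem_center_iff.2 fun b => ?_, fun ha b => ?_⟩
  · have lie_eq_zero : ⁅a, b⁆ = 0 := eq_zero_of_pow_eq_zero (lie_sq_eq_zero_of_lie_mem_center ha b)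
    exact (commute_iff_lie_eq.2 lie_eq_zero).eq.symm
  · have commute : Commute a b := (Subring.mem_center_iff.1 ha b).symm
    rw [commute.lie_eq]
    exact zero_mem _

end Commutator

instance isCentral_quaternion {R : Type*} [CommRing R] [NoZeroDivisors R] [NeZero (2 : R)] :
    Algebra.IsCentral R ℍ[R] where
  out q hq := by
    rw [Subalgebra.mem_center_iff] at hq
    -- The imaginary part of `p * q - q * p` is twice the cross product of the imaginary parts.
    have cross_imJ_eq_zero (p : ℍ[R]) : p.imK * q.imI - p.imI * q.imK = 0 := by
      have h := congrArg (fun x : ℍ[R] => x.imJ) (hq p)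
      simp only [Quaternion.imJ_mul] at h
      exact (mul_eq_zero_iff_left two_ne_zero).1 (by linear_combination h)
    have cross_imK_eq_zero (p : ℍ[R]) : p.imI * q.imJ - p.imJ * q.imI = 0 := by
      have h := congrArg (fun x : ℍ[R] => x.imK) (hq p)
      simp only [Quaternion.imK_mul] at h
      exact (mul_eq_zero_iff_left two_ne_zero).1 (by linear_combination h)
    have imI_eq_zero : q.imI = 0 := by simpa using cross_imK_eq_zero ⟨0, 0, 1, 0⟩
    have imJ_eq_zero : q.imJ = 0 := by simpa using cross_imK_eq_zero ⟨0, 1, 0, 0⟩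
    have imK_eq_zero : q.imK = 0 := by simpa using cross_imJ_eq_zero ⟨0, 1, 0, 0⟩
    exact Algebra.mem_bot.2 ⟨q.re, by ext <;> simp [*]⟩

/-- The generalized shear `(z, w) ↦ (μ (z - μw)², (z - μw)²)` with parameter `μ`. -/
def generalizedShear {R : Type*} [Ring R] (μ : R) (p : R × R) : R × R :=
  (μ * (p.1 - μ * p.2) ^ 2, (p.1 - μ * p.2) ^ 2)

section Divergence

variable (𝕜 : Type*) {A : Type*} [NontriviallyNormedField 𝕜] [NormedRing A] [NormedAlgebra 𝕜 A]

/-- The divergence operator `Div X(z, w) : h ↦ D₁[h] + D₂[h]` of a vector field `X = (X₁, X₂)` on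
`A × A`, where `D₁` and `D₂` are the Fréchet derivatives over `𝕜` of `X₁` in the first variable and
of `X₂` in the second. A partial derivative that does not exist counts as `0`. -/
noncomputable def divOperator (X : A × A → A × A) (z w : A) : A →L[𝕜] A :=
  fderiv 𝕜 (fun z' => (X (z', w)).1) z + fderiv 𝕜 (fun w' => (X (z, w')).2) w

/-- A vector field on `A × A` has divergence `g` if its divergence operator is `h ↦ h * g`; this is
the existence of such a `g`. -/
def HasDivergence (X : A × A → A × A) : Prop :=
  ∃ g : A × A → A, ∀ z w h, divOperator 𝕜 X z w h = h * g (z, w)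

variable {𝕜}

theorem hasDivergence_iff_of_divOperator_eq_mul {X : A × A → A × A} {a : A → A → A}
    (hX : ∀ z w h, divOperator 𝕜 X z w h = a z w * h) :
    HasDivergence 𝕜 X ↔ ∀ z w, a z w ∈ Subring.center A := by
  simp only [HasDivergence, hX, Subring.mem_center_iff]
  refine ⟨fun ⟨g, hg⟩ z w h => ?_, fun ha => ⟨fun p => a p.1 p.2, fun z w h => (ha z w h).symm⟩⟩
  have a_eq : a z w = g (z, w) := by simpa only [mul_one, one_mul] using hg z w 1
  rw [hg, a_eq]

theorem fderiv_fun_sq_apply {E : Type*} [NormedAddCommGroup E] [NormedSpace 𝕜 E] {f : E → A}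
    {x : E} (hf : DifferentiableAt 𝕜 f x) (h : E) :
    fderiv 𝕜 (fun y => f y ^ 2) x h = f x * fderiv 𝕜 f x h + fderiv 𝕜 f x h * f x := by
  simp [fderiv_fun_pow' 2 hf, Finset.sum_range_succ]

theorem divOperator_generalizedShear_apply (μ z w h : A) :
    divOperator 𝕜 (generalizedShear μ) z w h = ⁅μ, z - μ * w⁆ * h := by
  have fderiv_fst : fderiv 𝕜 (fun z' => μ * (z' - μ * w) ^ 2) z h
      = μ * ((z - μ * w) * h + h * (z - μ * w)) := by
    rw [fderiv_const_mul (by fun_prop), smul_apply, fderiv_fun_sq_apply (by fun_prop),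
      fderiv_sub_const, fderiv_fun_id, ContinuousLinearMap.id_apply, smul_eq_mul]
  have fderiv_snd : fderiv 𝕜 (fun w' => (z - μ * w') ^ 2) w h
      = -((z - μ * w) * (μ * h) + μ * h * (z - μ * w)) := by
    rw [fderiv_fun_sq_apply (by fun_prop), fderiv_const_sub, fderiv_const_mul (by fun_prop),
      fderiv_fun_id, neg_apply, smul_apply, ContinuousLinearMap.id_apply, smul_eq_mul, mul_neg,
      neg_mul, neg_add]
  calc divOperator 𝕜 (generalizedShear μ) z w h
      = μ * ((z - μ * w) * h + h * (z - μ * w))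
          + -((z - μ * w) * (μ * h) + μ * h * (z - μ * w)) :=
        congrArg₂ (· + ·) fderiv_fst fderiv_snd
    _ = ⁅μ, z - μ * w⁆ * h := by rw [Ring.lie_def]; noncomm_ring

theorem generalized_shear_has_div_iff_real_general [IsReduced A] (μ : A) :
    (HasDivergence 𝕜 (generalizedShear μ) ↔ μ ∈ Subalgebra.center 𝕜 A)
    ∧ (μ ∈ Subalgebra.center 𝕜 A → ∀ z w h, divOperator 𝕜 (generalizedShear μ) z w h = 0) := by
  refine ⟨?_, fun hμ z w h => ?_⟩
  · rw [hasDivergence_iff_of_divOperator_eq_mul (divOperator_generalizedShear_apply μ)]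
    refine Iff.trans ⟨fun hμ z => ?_, fun hμ z w => hμ _⟩ forall_lie_mem_center_iff
    simpa only [mul_zero, sub_zero] using hμ z 0
  · have commute : Commute μ (z - μ * w) := (Subalgebra.mem_center_iff.1 hμ _).symm
    rw [divOperator_generalizedShear_apply, commute.lie_eq, zero_mul]

end Divergence

/-- The vector field `X(z,w) = (μ (z - μw)², (z - μw)²)` has divergence (i.e. its
divergence operator is left-linear in `h`) if and only if `μ` is real, in which case its
divergence vanishes identically. -/
theorem generalized_shear_has_div_iff_real (μ : Quaternion ℝ) :
    ((∃ g : Quaternion ℝ × Quaternion ℝ → Quaternion ℝ, ∀ z w h : Quaternion ℝ,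
        fderiv ℝ (fun z' => μ * (z' - μ * w) ^ 2) z h
          + fderiv ℝ (fun w' => (z - μ * w') ^ 2) w h = h * g (z, w))
      ↔ ∃ r : ℝ, μ = (r : Quaternion ℝ))
    ∧ ((∃ r : ℝ, μ = (r : Quaternion ℝ)) → ∀ z w h : Quaternion ℝ,
        fderiv ℝ (fun z' => μ * (z' - μ * w) ^ 2) z h
          + fderiv ℝ (fun w' => (z - μ * w') ^ 2) w h = 0) := by
  have h := generalized_shear_has_div_iff_real_general (𝕜 := ℝ) μ
  rwa [Algebra.IsCentral.mem_center_iff] at h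
end
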